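/- arXiv:1703.09328 — 3 statements merged into one kernel-verified Lean document; each statement's English description precedes it below -/
import Mathlib

section
/- For every type A and every partial function h : A →. (Unit ⊕ A), there exists a unique partial function f : A →. ℕ satisfying, for all a : A, f a = (h a).bind (Sum.elim (fun _ => Part.some 0) (fun a' => Part.map Nat.succ (f a'))). Equivalently, the pair (ℕ, α), where α : ℕ →. (Unit ⊕ ℕ) is the total map with α 0 = Part.some (Sum.inl ()) and α (n+1) = Part.some (Sum.inr n), is a terminal coalgebra for the endofunctor sending X to Unit ⊕ X on the category of sets and partial functions. -/
/-- `StopsIn h n a`: iterating `h` from `a` makes exactly `n` steps and then stops. -/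
def StopsIn {A : Type} (h : A →. (Unit ⊕ A)) : ℕ → A → Prop
  | 0, a => Sum.inl () ∈ h a
  | n + 1, a => ∃ a', Sum.inr a' ∈ h a ∧ StopsIn h n a'

theorem StopsIn.unique {A : Type} {h : A →. (Unit ⊕ A)} :
    ∀ {n m : ℕ} {a : A}, StopsIn h n a → StopsIn h m a → n = m
  | 0, 0, _, _, _ => rfl
  | 0, _ + 1, _, h1, ⟨_, h2, _⟩ => by cases Part.mem_unique h1 h2
  | _ + 1, 0, _, ⟨_, h2, _⟩, h1 => by cases Part.mem_unique h1 h2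
  | _ + 1, _ + 1, _, ⟨_, h1, h1'⟩, ⟨_, h2, h2'⟩ => by
    cases Part.mem_unique h1 h2
    rw [StopsIn.unique h1' h2']

theorem mem_step_iff {A : Type} (h : A →. (Unit ⊕ A)) (f : A →. ℕ) (a : A) (n : ℕ) :
    n ∈ (h a).bind
        (Sum.elim (fun _ => Part.some 0) (fun a' => Part.map Nat.succ (f a'))) ↔
      (n = 0 ∧ Sum.inl () ∈ h a) ∨ ∃ a' m, Sum.inr a' ∈ h a ∧ m ∈ f a' ∧ n = m + 1 := by
  rw [Part.mem_bind_iff]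
  constructor
  · rintro ⟨u | a', h1, h2⟩
    · exact Or.inl ⟨by simpa using h2, h1⟩
    · obtain ⟨m, hm, rfl⟩ := (Part.mem_map_iff _).1 h2
      exact Or.inr ⟨a', m, h1, hm, rfl⟩
  · rintro (⟨rfl, h1⟩ | ⟨a', m, h1, hm, rfl⟩)
    · exact ⟨_, h1, Part.mem_some _⟩
    · exact ⟨_, h1, Part.mem_map _ hm⟩

theorem mem_iff_stopsIn {A : Type} (h : A →. (Unit ⊕ A)) (f : A →. ℕ)
    (hf : ∀ a : A, f a = (h a).bind
        (Sum.elim (fun _ => Part.some 0) (fun a' => Part.map Nat.succ (f a')))) :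
    ∀ (n : ℕ) (a : A), n ∈ f a ↔ StopsIn h n a := by
  intro n
  induction n with
  | zero => intro a; rw [hf, mem_step_iff]; simp [StopsIn]
  | succ n ih => intro a; rw [hf, mem_step_iff]; simp [StopsIn, ← ih]

/-- For every type `A` and every partial function
`h : A →. (Unit ⊕ A)` (a coalgebra for the endofunctor `X ↦ Unit ⊕ X` on the
category of sets and partial functions), there exists a unique partial
function `f : A →. ℕ` satisfying the coalgebra-morphism equation into the
terminal coalgebra `(ℕ, α)`. -/
theorem terminal_coalgebra_pfun (A : Type) (h : A →. (Unit ⊕ A)) :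
    ∃! f : A →. ℕ, ∀ a : A,
      f a = (h a).bind
        (Sum.elim (fun _ => Part.some 0) (fun a' => Part.map Nat.succ (f a'))) := by
  classical
  let g : A →. ℕ := fun a => ⟨∃ n, StopsIn h n a, fun H => H.choose⟩
  have hg : ∀ n a, n ∈ g a ↔ StopsIn h n a := by
    intro n a
    constructor
    · rintro ⟨H, rfl⟩
      exact H.choose_spec
    · intro H
      exact ⟨⟨n, H⟩, StopsIn.unique (Exists.choose_spec (⟨n, H⟩ : ∃ n, StopsIn h n a)) H⟩
  refine ⟨g, ?_, ?_⟩
  · intro a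
    refine Part.ext fun n => ?_
    rw [mem_step_iff, hg]
    cases n with
    | zero => simp [StopsIn]
    | succ n => simp [StopsIn, hg]
  · intro f hf
    funext a
    refine Part.ext fun n => ?_
    rw [hg, mem_iff_stopsIn h f hf]
end

section
/- Let h : A →. (Unit ⊕ A) be a partial function and let f : A →. ℕ be the unique partial function satisfying f a = (h a).bind (Sum.elim (fun _ => Part.some 0) (fun a' => Part.map Nat.succ (f a'))) for all a : A. Then for all a : A and n : ℕ, n ∈ f a if and only if there exists a sequence seq : ℕ → A with seq 0 = a such that h (seq k) = Part.some (Sum.inr (seq (k+1))) for all k < n and h (seq n) = Part.some (Sum.inl ()). In particular, f a is undefined exactly when the iteration of h starting from a never reaches an inl-value. -/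
/-- If `f : A →. ℕ` is the (unique) coalgebra morphism from
`(A, h)` into the terminal coalgebra `(ℕ, α)` of `X ↦ Unit ⊕ X` on the
category of sets and partial functions, i.e. `f` satisfies the stated
fixed-point equation, then `n ∈ f a` iff iterating `h` from `a` follows a
sequence of `inr`-steps of length `n` ending in an `inl`-value. -/
theorem mem_coalgebra_morphism_iff_seq (A : Type) (h : A →. (Unit ⊕ A))
    (f : A →. ℕ)
    (hf : ∀ a : A,
      f a = (h a).bind
        (Sum.elim (fun _ => Part.some 0) (fun a' => Part.map Nat.succ (f a')))) :
    ∀ (a : A) (n : ℕ),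
      n ∈ f a ↔
        ∃ seq : ℕ → A, seq 0 = a ∧
          (∀ k < n, h (seq k) = Part.some (Sum.inr (seq (k + 1)))) ∧
          h (seq n) = Part.some (Sum.inl ()) := by
  intro a n
  induction n generalizing a with
  | zero =>
    rw [hf a, Part.mem_bind_iff]
    constructor
    · rintro ⟨x, hx, hn⟩
      rcases x with u | a'
      · exact ⟨fun _ => a, rfl, fun k hk => absurd hk (Nat.not_lt_zero k),
          Part.eq_some_iff.2 hx⟩
      · obtain ⟨m, _, hm⟩ := (Part.mem_map_iff _).1 hn
        exact absurd hm (Nat.succ_ne_zero m)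
    · rintro ⟨seq, rfl, _, h0⟩
      exact ⟨Sum.inl (), Part.eq_some_iff.1 h0, Part.mem_some 0⟩
  | succ n ih =>
    rw [hf a, Part.mem_bind_iff]
    constructor
    · rintro ⟨x, hx, hn⟩
      rcases x with u | a'
      · exact absurd (Part.mem_some_iff.1 hn) (Nat.succ_ne_zero n)
      · obtain ⟨m, hm, hmn⟩ := (Part.mem_map_iff _).1 hn
        obtain rfl : m = n := Nat.succ.inj hmn
        obtain ⟨seq, h0, hs, hl⟩ := (ih a').1 hm
        refine ⟨fun k => Nat.casesOn k a seq, rfl, ?_, hl⟩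
        intro k hk
        cases k with
        | zero =>
          change h a = Part.some (Sum.inr (seq 0))
          rw [h0]
          exact Part.eq_some_iff.2 hx
        | succ k => exact hs k (Nat.lt_of_succ_lt_succ hk)
    · rintro ⟨seq, rfl, hs, hl⟩
      refine ⟨Sum.inr (seq 1), Part.eq_some_iff.1 (hs 0 (Nat.succ_pos n)), ?_⟩
      refine (Part.mem_map_iff _).2 ⟨n, (ih (seq 1)).2 ?_, rfl⟩
      exact ⟨fun k => seq (k + 1), rfl,
        fun k hk => hs (k + 1) (Nat.succ_lt_succ hk), hl⟩
end

section
/- Let g : ℕ → ℕ be a total function and define the (total) coalgebra step h : ℕ →. (Unit ⊕ ℕ) by h b = Part.some (Sum.inl ()) if g b % 2 = 0 and h b = Part.some (Sum.inr (b+1)) otherwise. Let f : ℕ →. ℕ be the unique partial function satisfying f b = (h b).bind (Sum.elim (fun _ => Part.some 0) (fun b' => Part.map Nat.succ (f b'))) for all b. Then for all n : ℕ, n ∈ f 0 if and only if g n % 2 = 0 and g m % 2 ≠ 0 for all m < n; that is, f 0 computes the safe minimization μb.(g b mod 2 = 0), being undefined when no such b exists. -/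
/-- Safe minimization via the terminal coalgebra.  For a total
`g : ℕ → ℕ`, let `h` be the coalgebra step that outputs `inl ()` when `g b`
is even and steps to `b + 1` otherwise.  The unique coalgebra morphism
`f : ℕ →. ℕ` then satisfies: `n ∈ f 0` iff `n` is the least `b` with
`g b` even (i.e. `f 0` computes `μb.(g b mod 2 = 0)`, undefined when no
such `b` exists). -/
theorem coalgebra_morphism_computes_safe_minimization (g : ℕ → ℕ)
    (h : ℕ →. (Unit ⊕ ℕ))
    (hh : ∀ b : ℕ, h b = if g b % 2 = 0
      then Part.some (Sum.inl ()) else Part.some (Sum.inr (b + 1)))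
    (f : ℕ →. ℕ)
    (hf : ∀ b : ℕ,
      f b = (h b).bind
        (Sum.elim (fun _ => Part.some 0) (fun b' => Part.map Nat.succ (f b')))) :
    ∀ n : ℕ, n ∈ f 0 ↔ g n % 2 = 0 ∧ ∀ m < n, g m % 2 ≠ 0 := by
  have h0 : ∀ b, g b % 2 = 0 → f b = Part.some 0 := by
    intro b hb
    rw [hf, hh, if_pos hb, Part.bind_some]
    rfl
  have h1 : ∀ b, g b % 2 ≠ 0 → f b = Part.map Nat.succ (f (b + 1)) := by
    intro b hb
    rw [hf, hh, if_neg hb, Part.bind_some]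
    rfl
  have key : ∀ n b : ℕ, n ∈ f b ↔ g (b + n) % 2 = 0 ∧ ∀ m < n, g (b + m) % 2 ≠ 0 := by
    intro n
    induction n with
    | zero =>
      intro b
      by_cases hb : g b % 2 = 0
      · rw [h0 b hb]
        simp [hb]
      · rw [h1 b hb]
        simp [hb]
    | succ n ih =>
      intro b
      by_cases hb : g b % 2 = 0
      · rw [h0 b hb]
        constructor
        · intro hn
          exact absurd (Part.mem_some_iff.1 hn) (Nat.succ_ne_zero n)
        · intro hn
          exact absurd hb (hn.2 0 (Nat.succ_pos n))
      · rw [h1 b hb, Part.mem_map_iff]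
        have e : (∃ a ∈ f (b + 1), Nat.succ a = n + 1) ↔ n ∈ f (b + 1) := by
          constructor
          · rintro ⟨a, ha, hs⟩
            exact Nat.succ.inj hs ▸ ha
          · intro hn
            exact ⟨n, hn, rfl⟩
        rw [e, ih, show b + 1 + n = b + (n + 1) by omega]
        refine and_congr_right fun _ => ⟨fun H m hm => ?_, fun H m hm => ?_⟩
        · cases m with
          | zero => exact hb
          | succ m =>
            have := H m (by omega)
            rwa [show b + 1 + m = b + (m + 1) by omega] at this
        · rw [show b + 1 + m = b + (m + 1) by omega]
          exact H (m + 1) (by omega)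
  intro n
  simpa using key n 0
end
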